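/- arXiv:2212.13848 — 6 statements merged into one kernel-verified Lean document; each statement's English description precedes it below -/
import Mathlib

section
/- Let (x_i, y_i)_{i=1}^n with each ‖x_i‖₂ = 1, let L̂(θ) = (1/n)·Σ_{i=1}^n (f_θ(x_i) − y_i)², and let g(θ) = (2/n)·Σ_{i=1}^n (f_θ(x_i) − y_i)·φ_θ(x_i) ∈ ℝ^{dm} be the subgradient of L̂ at θ. If every output weight satisfies u_k² = 1/m, then ‖g(θ)‖² ≤ 4·L̂(θ). -/
open Finset RealInnerProductSpace

/-- for a sample `(x_i, y_i)_{i=1}^n` of unit inputs, the empirical risk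
`L̂(θ) = (1/n)·Σ_i (f_θ(x_i) − y_i)²` and its subgradient
`g(θ) = (2/n)·Σ_i (f_θ(x_i) − y_i)·φ_θ(x_i)` (written blockwise) satisfy
`‖g(θ)‖² ≤ 4·L̂(θ)` whenever every output weight satisfies `u_k² = 1/m`. -/
theorem empirical_risk_subgradient_norm_sq_le
    (d m n : ℕ) (w : Fin m → EuclideanSpace ℝ (Fin d)) (u : Fin m → ℝ)
    (hu : ∀ k, (u k) ^ 2 = 1 / (m : ℝ))
    (x : Fin n → EuclideanSpace ℝ (Fin d)) (hx : ∀ i, ‖x i‖ = 1) (y : Fin n → ℝ)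
    (pred : Fin n → ℝ)
    (hpred : ∀ i, pred i = ∑ k, u k * max (⟪w k, x i⟫ : ℝ) 0)
    (g : Fin m → EuclideanSpace ℝ (Fin d))
    (hg : ∀ k, g k = ((2 : ℝ) / n) •
      ∑ i, ((pred i - y i) * (u k * (if (0:ℝ) < ⟪w k, x i⟫ then (1:ℝ) else 0))) • x i) :
    ∑ k, ‖g k‖ ^ 2 ≤ 4 * ((1 / (n : ℝ)) * ∑ i, (pred i - y i) ^ 2) := by
  have key : ∀ k, ‖g k‖ ^ 2 ≤ (1 / (m : ℝ)) * (4 * ((1 / (n : ℝ)) * ∑ i, (pred i - y i) ^ 2)) := by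
    intro k
    have h1 : ‖∑ i, ((pred i - y i) * (u k * (if (0:ℝ) < ⟪w k, x i⟫ then (1:ℝ) else 0))) • x i‖
        ≤ ∑ i, |pred i - y i| * |u k| := by
      refine (norm_sum_le _ _).trans (Finset.sum_le_sum fun i _ => ?_)
      rw [norm_smul, hx i, mul_one, Real.norm_eq_abs, abs_mul, abs_mul]
      refine mul_le_mul_of_nonneg_left ?_ (abs_nonneg _)
      split_ifs <;> simp
    have h2 : (∑ i, |pred i - y i| * |u k|) ^ 2
        ≤ (n : ℝ) * ((1 / (m : ℝ)) * ∑ i, (pred i - y i) ^ 2) := by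
      have h := sq_sum_le_card_mul_sum_sq (s := (Finset.univ : Finset (Fin n)))
        (f := fun i => |pred i - y i| * |u k|)
      simp only [mul_pow, sq_abs, hu k, Finset.card_univ, Fintype.card_fin] at h
      rw [← Finset.sum_mul, ← Finset.sum_mul] at h
      rw [← Finset.sum_mul]
      linarith
    have h3 := (pow_le_pow_left₀ (norm_nonneg _) h1 2).trans h2
    rw [hg k, norm_smul, mul_pow, Real.norm_eq_abs, sq_abs]
    refine (mul_le_mul_of_nonneg_left h3 (sq_nonneg _)).trans (le_of_eq ?_)
    rcases Nat.eq_zero_or_pos n with h0 | h0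
    · subst h0; simp
    · have : (n : ℝ) ≠ 0 := by positivity
      rw [div_pow]
      field_simp
      ring
  refine (Finset.sum_le_sum fun k _ => key k).trans ?_
  rw [Finset.sum_const, Finset.card_univ, Fintype.card_fin, nsmul_eq_mul, ← mul_assoc]
  have hn : 0 ≤ 4 * ((1 / (n : ℝ)) * ∑ i, (pred i - y i) ^ 2) := by positivity
  refine mul_le_of_le_one_left hn ?_
  rw [mul_one_div]
  exact div_self_le_one _
end

section
/- Let θ = (w_1,…,w_m) and θ̃ = (w̃_1,…,w̃_m) be parameter vectors in (ℝ^d)^m, let the output weights satisfy |u_k| = 1/√m for every k, let x ∈ ℝ^d with ‖x‖₂ = 1, and assume max_{k∈[m]} ‖w̃_k − w_k‖₂ ≤ ρ for some ρ ≥ 0. Then (φ_{θ̃}(x) − φ_θ(x))ᵀ θ̃ ≤ (ρ/√m)·|P(θ̃, θ, x)|. -/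
open Finset RealInnerProductSpace

/-- for parameter vectors `θ, θ̃` with `|u_k| = 1/√m`, a unit vector `x`, and
`max_k ‖w̃_k − w_k‖₂ ≤ ρ`, the inner product of the feature-map difference with `θ̃`
(written blockwise) satisfies `(φ_{θ̃}(x) − φ_θ(x))ᵀ θ̃ ≤ (ρ/√m)·|P(θ̃, θ, x)|`. -/
theorem feature_map_diff_inner_param_le
    (d m : ℕ) (w wt : Fin m → EuclideanSpace ℝ (Fin d)) (u : Fin m → ℝ)
    (hu : ∀ k, |u k| = 1 / Real.sqrt m)
    (x : EuclideanSpace ℝ (Fin d)) (hx : ‖x‖ = 1)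
    (ρ : ℝ) (hρ : 0 ≤ ρ) (hw : ∀ k, ‖wt k - w k‖ ≤ ρ) :
    ∑ k, (⟪(u k * (if (0:ℝ) < ⟪wt k, x⟫ then (1:ℝ) else 0)) • x
            - (u k * (if (0:ℝ) < ⟪w k, x⟫ then (1:ℝ) else 0)) • x, wt k⟫ : ℝ)
      ≤ (ρ / Real.sqrt m) *
          ((Finset.univ.filter fun k : Fin m =>
            (if (0:ℝ) < ⟪wt k, x⟫ then (1:ℝ) else 0)
              ≠ (if (0:ℝ) < ⟪w k, x⟫ then (1:ℝ) else 0)).card : ℝ) := by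
  rw [Finset.card_filter]
  push_cast
  rw [Finset.mul_sum]
  apply Finset.sum_le_sum
  intro k _
  rw [← sub_smul, real_inner_smul_left, real_inner_comm (wt k) x]
  have h1 : |(inner ℝ (wt k) x : ℝ) - inner ℝ (w k) x| ≤ ρ := by
    rw [← inner_sub_left]
    refine (abs_real_inner_le_norm _ _).trans ?_
    rw [hx, mul_one]
    exact hw k
  have key : |(inner ℝ (wt k) x : ℝ)| ≤ ρ → |u k * inner ℝ (wt k) x| ≤ ρ / Real.sqrt m := by
    intro h
    rw [abs_mul, hu k, div_mul_eq_mul_div, one_mul]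
    gcongr
  generalize (inner ℝ (wt k) x : ℝ) = a at *
  generalize (inner ℝ (w k) x : ℝ) = b at *
  rw [abs_le] at h1
  by_cases ha : 0 < a <;> by_cases hb : 0 < b
  · simp [ha, hb]
  · have := abs_le.1 (key (abs_le.2 ⟨by linarith, by linarith⟩))
    simp [ha, hb]
    linarith
  · have := abs_le.1 (key (abs_le.2 ⟨by linarith, by linarith⟩))
    simp [ha, hb]
    linarith
  · simp [ha, hb]
end

section
/- Let K be an n×n real symmetric positive semidefinite matrix, let η ∈ (0, 1/2], and assume (2η/n)·K ⪯ I. Given target vectors y, ỹ ∈ ℝⁿ, define the two gradient-descent prediction sequences f_0 = 0, f_{s+1} = f_s − (2η/n)·K·(f_s − y) and f̃_0 = 0, f̃_{s+1} = f̃_s − (2η/n)·K·(f̃_s − ỹ). If |y_i − ỹ_i| ≤ A for every i ∈ [n] and some A ≥ 0, then for every t ∈ ℕ the empirical squared norm of the difference satisfies (1/n)·Σ_{i=1}^n (f_{t,i} − f̃_{t,i})² ≤ A². -/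
open Finset

lemma gd_aux_step {n : ℕ} (P : Matrix (Fin n) (Fin n) ℝ) (hP : P.PosSemidef)
    (hM : (1 - P).PosSemidef) : ∀ j : ℕ, (P ^ j - P ^ (j + 1)).PosSemidef
  | 0 => by simpa using hM
  | 1 => by
    have h1 := hM.mul_mul_conjTranspose_same P
    have h2 := hP.mul_mul_conjTranspose_same (1 - P)
    rw [hP.isHermitian.eq] at h1
    rw [hM.isHermitian.eq] at h2
    have h := h1.add h2
    have e : P ^ 1 - P ^ (1 + 1) = P * (1 - P) * P + (1 - P) * P * (1 - P) := by
      noncomm_ring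
    rw [e]
    exact h
  | j + 2 => by
    have h1 := (gd_aux_step P hP hM j).mul_mul_conjTranspose_same P
    rw [hP.isHermitian.eq] at h1
    have e : P ^ (j + 2) - P ^ (j + 2 + 1) = P * (P ^ j - P ^ (j + 1)) * P := by
      rw [mul_sub, sub_mul, ← pow_succ', ← pow_succ, ← pow_succ', ← pow_succ]
    rw [e]
    exact h1

lemma gd_aux_anti {n : ℕ} (P : Matrix (Fin n) (Fin n) ℝ) (hP : P.PosSemidef)
    (hM : (1 - P).PosSemidef) (e : Fin n → ℝ) :
    Antitone (fun j : ℕ => e ⬝ᵥ (P ^ j).mulVec e) := by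
  refine antitone_nat_of_succ_le fun j => ?_
  have h := (gd_aux_step P hP hM j).dotProduct_mulVec_nonneg e
  rw [Matrix.sub_mulVec, dotProduct_sub] at h
  simp only [star_trivial] at h
  linarith


/-- for a symmetric PSD kernel matrix `K`, step size `η ∈ (0, 1/2]` with
`(2η/n)·K ⪯ I`, and two GD prediction sequences driven by targets `y` and `ỹ` with
`|y_i − ỹ_i| ≤ A` for all `i`, the empirical squared distance satisfies
`(1/n)·Σ_i (f_{t,i} − f̃_{t,i})² ≤ A²` for every `t`. -/
theorem gd_kls_target_perturbation
    (n : ℕ) (K : Matrix (Fin n) (Fin n) ℝ) (hK : K.PosSemidef)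
    (η : ℝ) (hη : 0 < η) (hη2 : η ≤ 1 / 2)
    (hstep : ((1 : Matrix (Fin n) (Fin n) ℝ) - (2 * η / n) • K).PosSemidef)
    (y yt : Fin n → ℝ) (A : ℝ) (hA : 0 ≤ A) (hy : ∀ i, |y i - yt i| ≤ A)
    (f ft : ℕ → Fin n → ℝ) (hf0 : f 0 = 0) (hft0 : ft 0 = 0)
    (hf : ∀ s, f (s + 1) = f s - ((2 * η / n) • K).mulVec (f s - y))
    (hft : ∀ s, ft (s + 1) = ft s - ((2 * η / n) • K).mulVec (ft s - yt))
    (t : ℕ) :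
    (1 / (n : ℝ)) * ∑ i, (f t i - ft t i) ^ 2 ≤ A ^ 2 := by
  set c : ℝ := 2 * η / n with hc
  set P : Matrix (Fin n) (Fin n) ℝ := 1 - c • K with hPdef
  set e : Fin n → ℝ := y - yt with he
  have hc0 : 0 ≤ c := by positivity
  have hM : (1 - P).PosSemidef := by
    have : 1 - P = c • K := by rw [hPdef]; abel
    rw [this]
    exact hK.smul hc0
  have hd : ∀ s, f s - ft s = e - (P ^ s).mulVec e := by
    intro s
    induction s with
    | zero => simp [hf0, hft0]
    | succ s ih =>
      have h1 : f (s + 1) - ft (s + 1) = P.mulVec (f s - ft s) + (c • K).mulVec e := by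
        rw [hf, hft, hPdef, Matrix.sub_mulVec, Matrix.one_mulVec, he]
        simp only [Matrix.mulVec_sub]
        abel
      have h2 : (c • K).mulVec e = e - P.mulVec e := by
        rw [hPdef, Matrix.sub_mulVec, Matrix.one_mulVec]
        abel
      rw [h1, ih, h2, Matrix.mulVec_sub, Matrix.mulVec_mulVec, ← pow_succ']
      abel
  have hsum : ∑ i, (f t i - ft t i) ^ 2 = (f t - ft t) ⬝ᵥ (f t - ft t) := by
    simp [dotProduct, pow_two]
  have hRR : (P ^ t).mulVec e ⬝ᵥ (P ^ t).mulVec e = e ⬝ᵥ (P ^ (t + t)).mulVec e := by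
    have hH : Matrix.conjTranspose (P ^ t) = P ^ t := (hstep.isHermitian.pow t).eq
    rw [Matrix.conjTranspose_eq_transpose_of_trivial] at hH
    rw [pow_add, ← Matrix.mulVec_mulVec, Matrix.dotProduct_mulVec e, ← Matrix.mulVec_transpose, hH]
  have hle : (f t - ft t) ⬝ᵥ (f t - ft t) ≤ e ⬝ᵥ e := by
    have ha : e ⬝ᵥ (P ^ (t + t)).mulVec e ≤ e ⬝ᵥ (P ^ t).mulVec e :=
      gd_aux_anti P hstep hM e (Nat.le_add_left t t)
    have hn : 0 ≤ e ⬝ᵥ (P ^ t).mulVec e := by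
      simpa using (hstep.pow t).dotProduct_mulVec_nonneg e
    rw [hd]
    clear_value e
    rw [sub_dotProduct, dotProduct_sub, dotProduct_sub, hRR,
      dotProduct_comm ((P ^ t).mulVec e) e]
    linarith
  have hee : e ⬝ᵥ e ≤ n * A ^ 2 := by
    have : ∀ i ∈ (Finset.univ : Finset (Fin n)), e i * e i ≤ A ^ 2 := by
      intro i _
      rw [← pow_two]
      exact sq_le_sq' (abs_le.mp (hy i)).1 (abs_le.mp (hy i)).2
    simpa [dotProduct] using Finset.sum_le_sum this
  rw [hsum]
  rcases Nat.eq_zero_or_pos n with h0 | hpos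
  · have : (1 / (n : ℝ)) = 0 := by simp [h0]
    rw [this, zero_mul]
    positivity
  · have : (0 : ℝ) < n := by exact_mod_cast hpos
    rw [one_div, inv_mul_le_iff₀ this]
    exact hle.trans hee
end

section
/- For any unit vectors x, x̃ ∈ ℝ^d, the standard Gaussian measure of the intersection of the two half-spaces is γ_d{w ∈ ℝ^d : wᵀx > 0 and wᵀx̃ > 0} = (π − arccos(xᵀx̃)) / (2π). Consequently the neural tangent kernel of the ReLU activation, κ(x, x̃) = (xᵀx̃)·γ_d{w : wᵀx > 0 and wᵀx̃ > 0}, has the analytic form κ(x, x̃) = (xᵀx̃)·(π − arccos(xᵀx̃)) / (2π). -/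
open MeasureTheory ProbabilityTheory Real Finset

lemma aux_charFun {ι : Type} [Fintype ι] (u : ι → ℝ) :
    ∫ w, Complex.exp (((∑ i, w i * u i : ℝ) : ℂ) * Complex.I)
      ∂(Measure.pi fun _ : ι => gaussianReal 0 1)
    = Complex.exp (-(((∑ i, u i ^ 2 : ℝ) : ℂ)) / 2) := by
  have h1 : ∀ w : ι → ℝ, Complex.exp (((∑ i, w i * u i : ℝ) : ℂ) * Complex.I)
      = ∏ i, Complex.exp ((u i : ℂ) * (w i : ℂ) * Complex.I) := by
    intro w
    rw [← Complex.exp_sum, ← Finset.sum_mul]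
    push_cast
    congr 2
    exact Finset.sum_congr rfl fun i _ => mul_comm _ _
  simp_rw [h1]
  rw [integral_fintype_prod_eq_prod
    (f := fun (i : ι) (y : ℝ) => Complex.exp ((u i : ℂ) * (y : ℂ) * Complex.I))]
  have h2 : ∀ i, ∫ y, Complex.exp ((u i : ℂ) * (y : ℂ) * Complex.I) ∂(gaussianReal 0 1)
      = Complex.exp (-((u i ^ 2 : ℝ) : ℂ) / 2) := by
    intro i
    rw [← charFun_apply_real, charFun_gaussianReal]
    congr 1
    push_cast
    ring
  simp_rw [h2]
  rw [← Complex.exp_sum]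
  push_cast
  rw [← Finset.sum_div, Finset.sum_neg_distrib]

lemma aux_map {ι κ : Type} [Fintype ι] [Fintype κ] (x y : ι → ℝ) (x' y' : κ → ℝ)
    (hx : ∑ i, x i ^ 2 = ∑ i, x' i ^ 2) (hy : ∑ i, y i ^ 2 = ∑ i, y' i ^ 2)
    (hxy : ∑ i, x i * y i = ∑ i, x' i * y' i) :
    (Measure.pi fun _ : ι => gaussianReal 0 1).map
        (fun w => (∑ i, w i * x i, ∑ i, w i * y i)) =
    (Measure.pi fun _ : κ => gaussianReal 0 1).map
        (fun w => (∑ i, w i * x' i, ∑ i, w i * y' i)) := by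
  have key : ∀ {ι : Type} [Fintype ι] (x y : ι → ℝ) (L : StrongDual ℝ (ℝ × ℝ)),
      charFunDual ((Measure.pi fun _ : ι => gaussianReal 0 1).map
        (fun w => (∑ i, w i * x i, ∑ i, w i * y i))) L
      = Complex.exp (-(((L (1, 0) ^ 2 * (∑ i, x i ^ 2) + 2 * L (1, 0) * L (0, 1) * (∑ i, x i * y i)
          + L (0, 1) ^ 2 * (∑ i, y i ^ 2) : ℝ) : ℂ)) / 2) := by
    intro ι _ x y L
    have hL : ∀ a b : ℝ, L (a, b) = a * L (1, 0) + b * L (0, 1) := by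
      intro a b
      have : ((a, b) : ℝ × ℝ) = a • ((1, 0) : ℝ × ℝ) + b • ((0, 1) : ℝ × ℝ) := by simp
      rw [this, map_add, map_smul, map_smul, smul_eq_mul, smul_eq_mul]
    rw [charFunDual_apply, integral_map (by fun_prop) (by fun_prop)]
    have h := aux_charFun (fun i => L (1, 0) * x i + L (0, 1) * y i)
    have e1 : ∀ w : ι → ℝ, L (∑ i, w i * x i, ∑ i, w i * y i)
        = ∑ i, w i * (L (1, 0) * x i + L (0, 1) * y i) := by
      intro w
      rw [hL, Finset.sum_mul, Finset.sum_mul, ← Finset.sum_add_distrib]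
      exact Finset.sum_congr rfl fun i _ => by ring
    simp_rw [e1]
    rw [h]
    congr 4
    rw [Finset.mul_sum, Finset.mul_sum, Finset.mul_sum, ← Finset.sum_add_distrib,
      ← Finset.sum_add_distrib]
    exact Finset.sum_congr rfl fun i _ => by ring
  have : IsProbabilityMeasure ((Measure.pi fun _ : ι => gaussianReal 0 1).map
        (fun w => (∑ i, w i * x i, ∑ i, w i * y i))) :=
    Measure.isProbabilityMeasure_map (by fun_prop)
  have : IsProbabilityMeasure ((Measure.pi fun _ : κ => gaussianReal 0 1).map
        (fun w => (∑ i, w i * x' i, ∑ i, w i * y' i))) :=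
    Measure.isProbabilityMeasure_map (by fun_prop)
  refine Measure.ext_of_charFunDual (funext fun L => ?_)
  rw [key, key, hx, hy, hxy]

lemma aux_polar (S : Set (ℝ × ℝ)) (hS : MeasurableSet S) (A : Set ℝ) (hA : MeasurableSet A)
    (hA' : A ⊆ Set.Ioo (-π) π)
    (h : ∀ r t : ℝ, 0 < r → t ∈ Set.Ioo (-π) π → ((r * cos t, r * sin t) ∈ S ↔ t ∈ A)) :
    ((gaussianReal 0 1).prod (gaussianReal 0 1)) S =
      (∫⁻ r in Set.Ioi (0 : ℝ), ENNReal.ofReal r *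
        (gaussianPDF 0 1 r * gaussianPDF 0 1 0)) * volume A := by
  have hpdf : ∀ r t : ℝ, gaussianPDF 0 1 (r * cos t) * gaussianPDF 0 1 (r * sin t)
      = gaussianPDF 0 1 r * gaussianPDF 0 1 0 := by
    intro r t
    simp only [gaussianPDF]
    rw [← ENNReal.ofReal_mul (gaussianPDFReal_nonneg _ _ _),
      ← ENNReal.ofReal_mul (gaussianPDFReal_nonneg _ _ _)]
    congr 1
    simp only [gaussianPDFReal]
    rw [mul_mul_mul_comm, mul_mul_mul_comm _ _ _ (rexp (-(0 - 0) ^ 2 / _)), ← Real.exp_add, ← Real.exp_add]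
    congr 2
    have := Real.sin_sq_add_cos_sq t
    simp only [NNReal.coe_one, sub_zero, mul_one]
    linear_combination (-r ^ 2 / 2) * this
  have hm : Measurable (gaussianPDF 0 1) := measurable_gaussianPDF 0 1
  rw [gaussianReal_of_var_ne_zero 0 one_ne_zero, prod_withDensity hm hm, withDensity_apply _ hS,
    ← lintegral_indicator hS, ← Measure.volume_eq_prod, ← lintegral_comp_polarCoord_symm]
  have e : ∫⁻ p in polarCoord.target, ENNReal.ofReal p.1 • (S.indicator
        (fun z : ℝ × ℝ => gaussianPDF 0 1 z.1 * gaussianPDF 0 1 z.2) (polarCoord.symm p))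
      = ∫⁻ p in polarCoord.target, (ENNReal.ofReal p.1 *
        (gaussianPDF 0 1 p.1 * gaussianPDF 0 1 0)) * A.indicator 1 p.2 := by
    refine setLIntegral_congr_fun polarCoord.open_target.measurableSet ?_
    rintro ⟨r, t⟩ ⟨hr, ht⟩
    have := h r t hr ht
    simp only [polarCoord_symm_apply, smul_eq_mul]
    by_cases htA : t ∈ A
    · rw [Set.indicator_of_mem (this.2 htA), Set.indicator_of_mem htA]
      simp [hpdf]
    · rw [Set.indicator_of_notMem (fun hh => htA (this.1 hh)), Set.indicator_of_notMem htA]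
      simp
  rw [e, polarCoord_target, Measure.volume_eq_prod, ← Measure.prod_restrict,
    lintegral_prod_mul (f := fun r => ENNReal.ofReal r *
        (gaussianPDF 0 1 r * gaussianPDF 0 1 0)) (by fun_prop)
        ((measurable_one.indicator hA).aemeasurable)]
  congr 1
  rw [lintegral_indicator_one hA, Measure.restrict_apply hA, Set.inter_eq_left.2 hA']

lemma aux_meas (θ : ℝ) :
    MeasurableSet {p : ℝ × ℝ | 0 < p.1 ∧ 0 < p.1 * cos θ + p.2 * sin θ} :=
  (measurableSet_lt measurable_const measurable_fst).inter
    (measurableSet_lt measurable_const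
      ((measurable_fst.mul_const _).add (measurable_snd.mul_const _)))

lemma aux_two (θ : ℝ) (h0 : 0 ≤ θ) (h1 : θ ≤ π) :
    ((gaussianReal 0 1).prod (gaussianReal 0 1))
      {p : ℝ × ℝ | 0 < p.1 ∧ 0 < p.1 * cos θ + p.2 * sin θ}
      = ENNReal.ofReal ((π - θ) / (2 * π)) := by
  have hpi := Real.pi_pos
  have hu := aux_polar Set.univ MeasurableSet.univ (Set.Ioo (-π) π) measurableSet_Ioo subset_rfl
    (fun r t hr ht => by simp only [Set.mem_univ, ht])
  rw [measure_univ, Real.volume_Ioo] at hu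
  have hs := aux_polar {p : ℝ × ℝ | 0 < p.1 ∧ 0 < p.1 * cos θ + p.2 * sin θ}
    (aux_meas θ)
    (Set.Ioo (θ - π / 2) (π / 2)) measurableSet_Ioo
    (fun t ht => ⟨by linarith [ht.1], by linarith [ht.2]⟩)
    (by
      intro r t hr ht
      have hc : r * cos t * cos θ + r * sin t * sin θ = r * cos (t - θ) := by
        rw [Real.cos_sub]; ring
      simp only [Set.mem_ofPred_eq, hc, mul_pos_iff_of_pos_left hr]
      constructor
      · rintro ⟨a, b⟩
        have t1 : t < π / 2 := by
          by_contra hh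
          exact absurd a (not_lt.2
            (Real.cos_nonpos_of_pi_div_two_le_of_le (not_lt.1 hh) (by linarith [ht.2])))
        have t2 : -(π / 2) < t := by
          by_contra hh
          rw [← Real.cos_neg] at a
          exact absurd a (not_lt.2
            (Real.cos_nonpos_of_pi_div_two_le_of_le (by linarith) (by linarith [ht.1])))
        refine ⟨?_, t1⟩
        by_contra hh
        rw [← Real.cos_neg] at b
        exact absurd b (not_lt.2
          (Real.cos_nonpos_of_pi_div_two_le_of_le (by linarith) (by linarith)))
      · rintro ⟨a, b⟩
        exact ⟨Real.cos_pos_of_mem_Ioo ⟨by linarith, b⟩,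
          Real.cos_pos_of_mem_Ioo ⟨by linarith, by linarith⟩⟩)
  rw [hs, Real.volume_Ioo]
  generalize (∫⁻ r in Set.Ioi (0 : ℝ), ENNReal.ofReal r *
        (gaussianPDF 0 1 r * gaussianPDF 0 1 0)) = K at hu ⊢
  have e : π / 2 - (θ - π / 2) = (π - -π) * ((π - θ) / (2 * π)) := by
    field_simp
    ring
  rw [e, ENNReal.ofReal_mul (by linarith), ← mul_assoc, ← hu, one_mul]

lemma aux_main
    (d : ℕ) (x xt : Fin d → ℝ)
    (hx : ∑ i, (x i) ^ 2 = 1) (hxt : ∑ i, (xt i) ^ 2 = 1) :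
    (Measure.pi fun _ : Fin d => gaussianReal 0 1)
        {w : Fin d → ℝ | 0 < ∑ i, w i * x i ∧ 0 < ∑ i, w i * xt i}
      = ENNReal.ofReal ((π - Real.arccos (∑ i, x i * xt i)) / (2 * π)) := by
  have hcs : (∑ i, x i * xt i) ^ 2 ≤ 1 := by
    have := Finset.sum_mul_sq_le_sq_mul_sq Finset.univ x xt
    rwa [hx, hxt, one_mul] at this
  have hc := abs_le.1 ((sq_le_one_iff_abs_le_one _).1 hcs)
  rw [← aux_two _ (Real.arccos_nonneg _) (Real.arccos_le_pi _)]
  have hcos := Real.cos_arccos hc.1 hc.2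
  set θ := Real.arccos (∑ i, x i * xt i) with hθ
  have hmap := aux_map x xt (![1, 0] : Fin 2 → ℝ) (![cos θ, sin θ] : Fin 2 → ℝ)
    (by simp [hx]) (by simp [hxt]) (by simp [hcos])
  have hQ : MeasurableSet {p : ℝ × ℝ | 0 < p.1 ∧ 0 < p.2} :=
    (measurableSet_lt measurable_const measurable_fst).inter
      (measurableSet_lt measurable_const measurable_snd)
  have hm := congrArg (fun μ => μ {p : ℝ × ℝ | 0 < p.1 ∧ 0 < p.2}) hmap
  rw [Measure.map_apply (by fun_prop) hQ, Measure.map_apply (by fun_prop) hQ] at hm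
  have h2 := (measurePreserving_finTwoArrow (gaussianReal 0 1)).measure_preimage
    (s := {p : ℝ × ℝ | 0 < p.1 ∧ 0 < p.1 * cos θ + p.2 * sin θ})
    (aux_meas θ).nullMeasurableSet
  rw [← h2]
  refine hm.trans ?_
  congr 1
  ext w
  simp [Fin.sum_univ_two, MeasurableEquiv.finTwoArrow]

/-- for unit vectors `x, x̃ ∈ ℝ^d`, the standard Gaussian measure of the
intersection of the half-spaces `{w : wᵀx > 0}` and `{w : wᵀx̃ > 0}` equals
`(π − arccos(xᵀx̃)) / (2π)`; consequently the ReLU neural tangent kernel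
`κ(x, x̃) = (xᵀx̃)·γ_d{w : wᵀx > 0, wᵀx̃ > 0}` has the analytic form
`κ(x, x̃) = (xᵀx̃)·(π − arccos(xᵀx̃)) / (2π)`. -/
theorem relu_ntk_arccos_form
    (d : ℕ) (x xt : Fin d → ℝ)
    (hx : ∑ i, (x i) ^ 2 = 1) (hxt : ∑ i, (xt i) ^ 2 = 1) :
    ((Measure.pi fun _ : Fin d => gaussianReal 0 1)
        {w : Fin d → ℝ | 0 < ∑ i, w i * x i ∧ 0 < ∑ i, w i * xt i}
      = ENNReal.ofReal ((π - Real.arccos (∑ i, x i * xt i)) / (2 * π))) ∧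
    ((∑ i, x i * xt i) *
        ((Measure.pi fun _ : Fin d => gaussianReal 0 1)
          {w : Fin d → ℝ | 0 < ∑ i, w i * x i ∧ 0 < ∑ i, w i * xt i}).toReal
      = (∑ i, x i * xt i) * ((π - Real.arccos (∑ i, x i * xt i)) / (2 * π))) := by
  have h := aux_main d x xt hx hxt
  refine ⟨h, ?_⟩
  rw [h, ENNReal.toReal_ofReal]
  exact div_nonneg (sub_nonneg.2 (Real.arccos_le_pi _)) (by positivity)
end

section
/- Let d > 2 be an integer, let Λ > 0, C > 0, x > 0, y > 0, and define the approximation-error function A(R) = C·Λ·(√R/Λ)^{−2/(d−2)}·ln(√R/Λ) for R > 0. Set R* = Λ²·(y/x)^{2/d − 1} and assume R* ≥ max(C, Λ²). Then x·A(R*)² + y·R* ≤ (1 + C²·(ln₊((y/x)^{1/d − 1/2}))²)·Λ²·x^{1−2/d}·y^{2/d}, where ln₊(z) = max(ln z, 0); in particular the minimum of x·A(R)² + y·R over R ≥ max(C, Λ²) is at most this bound. -/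
/-- approximation–estimation trade-off. For `d > 2`, `Λ, C, x, y > 0` and
`A(R) = C·Λ·(√R/Λ)^{−2/(d−2)}·ln(√R/Λ)`, setting `R* = Λ²·(y/x)^{2/d − 1}` with
`R* ≥ max(C, Λ²)`, one has
`x·A(R*)² + y·R* ≤ (1 + C²·ln₊²((y/x)^{1/d − 1/2}))·Λ²·x^{1−2/d}·y^{2/d}`;
in particular the minimum of `x·A(R)² + y·R` over `R ≥ max(C, Λ²)` is at most this bound. -/
theorem lipschitz_approx_tradeoff
    (d : ℕ) (hd : 2 < d) (Λ C x y : ℝ)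
    (hΛ : 0 < Λ) (hC : 0 < C) (hx : 0 < x) (hy : 0 < y)
    (A : ℝ → ℝ)
    (hA : ∀ R > 0, A R = C * Λ * (Real.sqrt R / Λ) ^ (-(2 : ℝ) / ((d : ℝ) - 2))
        * Real.log (Real.sqrt R / Λ))
    (Rstar : ℝ) (hRstar : Rstar = Λ ^ 2 * (y / x) ^ ((2 : ℝ) / d - 1))
    (hRge : max C (Λ ^ 2) ≤ Rstar) :
    (x * A Rstar ^ 2 + y * Rstar
        ≤ (1 + C ^ 2 * (max (Real.log ((y / x) ^ ((1 : ℝ) / d - 1 / 2))) 0) ^ 2)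
            * Λ ^ 2 * x ^ (1 - (2 : ℝ) / d) * y ^ ((2 : ℝ) / d)) ∧
    (∃ R, max C (Λ ^ 2) ≤ R ∧
      x * A R ^ 2 + y * R
        ≤ (1 + C ^ 2 * (max (Real.log ((y / x) ^ ((1 : ℝ) / d - 1 / 2))) 0) ^ 2)
            * Λ ^ 2 * x ^ (1 - (2 : ℝ) / d) * y ^ ((2 : ℝ) / d)) := by
  have hd0 : (d : ℝ) ≠ 0 := by
    have : d ≠ 0 := by omega
    exact_mod_cast this
  have hd2 : (d : ℝ) - 2 ≠ 0 := by
    have : (2 : ℝ) < d := by exact_mod_cast hd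
    linarith
  have hq : 0 < y / x := div_pos hy hx
  have hR0 : 0 < Rstar := lt_of_lt_of_le hC ((le_max_left _ _).trans hRge)
  have hL2 : Λ ^ 2 ≤ Rstar := (le_max_right _ _).trans hRge
  have hs : Real.sqrt Rstar / Λ = (y / x) ^ ((1 : ℝ) / d - 1 / 2) := by
    have h1 : Rstar = (Λ * (y / x) ^ ((1 : ℝ) / d - 1 / 2)) ^ 2 := by
      rw [hRstar, mul_pow, ← Real.rpow_natCast ((y / x) ^ ((1 : ℝ) / d - 1 / 2)) 2,
        ← Real.rpow_mul hq.le]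
      congr 2
      push_cast
      ring
    rw [h1, Real.sqrt_sq (by positivity)]
    field_simp
  have h1 : 1 ≤ (y / x) ^ ((1 : ℝ) / d - 1 / 2) := by
    rw [← hs, le_div_iff₀ hΛ, one_mul]
    exact Real.le_sqrt_of_sq_le hL2
  have hmax : max (Real.log ((y / x) ^ ((1 : ℝ) / d - 1 / 2))) 0
      = Real.log ((y / x) ^ ((1 : ℝ) / d - 1 / 2)) := max_eq_left (Real.log_nonneg h1)
  have hAR := hA Rstar hR0
  rw [hs, ← Real.rpow_mul hq.le] at hAR
  have he : ((1 : ℝ) / d - 1 / 2) * (-(2 : ℝ) / ((d : ℝ) - 2)) = 1 / d := by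
    field_simp
    ring
  rw [he] at hAR
  have hsq : ((y / x) ^ ((1 : ℝ) / d)) ^ 2 = y ^ ((2 : ℝ) / d) / x ^ ((2 : ℝ) / d) := by
    rw [← Real.rpow_natCast, ← Real.rpow_mul hq.le, ← Real.div_rpow hy.le hx.le]
    congr 1
    push_cast
    ring
  have hR' : Rstar = Λ ^ 2 * (y ^ ((2 : ℝ) / d) / x ^ ((2 : ℝ) / d) / (y / x)) := by
    rw [hRstar, Real.rpow_sub hq, Real.rpow_one, Real.div_rpow hy.le hx.le]
  have hx' : x ^ (1 - (2 : ℝ) / d) = x / x ^ ((2 : ℝ) / d) := by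
    rw [Real.rpow_sub hx, Real.rpow_one]
  have key : x * A Rstar ^ 2 + y * Rstar
        ≤ (1 + C ^ 2 * (max (Real.log ((y / x) ^ ((1 : ℝ) / d - 1 / 2))) 0) ^ 2)
            * Λ ^ 2 * x ^ (1 - (2 : ℝ) / d) * y ^ ((2 : ℝ) / d) := by
    rw [hmax, hAR, hx', mul_pow, mul_pow, hsq]
    generalize Real.log ((y / x) ^ ((1 : ℝ) / d - 1 / 2)) = L
    rw [hR']
    have hp : 0 < x ^ ((2 : ℝ) / d) := Real.rpow_pos_of_pos hx _
    generalize x ^ ((2 : ℝ) / d) = a at *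
    generalize y ^ ((2 : ℝ) / d) = b at *
    apply le_of_eq
    field_simp
    ring
  exact ⟨key, Rstar, hRge, key⟩
end

section
/- Let K and K̂ be n×n real symmetric matrices with K̂ positive semidefinite, let c > 0 satisfy c·λ_max(K̂) ≤ 1, and let λ = λ_min(K̂). Fix y ∈ ℝⁿ and define the sequences u_0 = v_0 = 0, u_{s+1} = u_s − c·K̂·(u_s − y), and v_{s+1} = v_s − c·K·(v_s − y). Then for every t ≥ 1, ‖u_t − v_t‖₂ ≤ c·‖K − K̂‖_op · Σ_{s=0}^{t−1} (1 − c·λ)^{t−1−s}·‖v_s − y‖₂. -/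
open Finset


lemma gd_aux_contract {n : ℕ} (M : Matrix (Fin n) (Fin n) ℝ) (hM : M.IsHermitian)
    (c r : ℝ) (hr : 0 ≤ r) (h0 : ∀ i, 0 ≤ 1 - c * hM.eigenvalues i)
    (h1 : ∀ i, 1 - c * hM.eigenvalues i ≤ r) (w : Fin n → ℝ) :
    ‖WithLp.toLp 2 (w - c • M.mulVec w)‖ ≤ r * ‖WithLp.toLp 2 w‖ := by
  have key : ∀ i, inner ℝ (hM.eigenvectorBasis i) (WithLp.toLp 2 (w - c • M.mulVec w))
      = (1 - c * hM.eigenvalues i) * inner ℝ (hM.eigenvectorBasis i) (WithLp.toLp 2 w) := by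
    intro i
    have h := hM.mulVec_eigenvectorBasis i
    have hT : M.transpose = M := by simpa using hM.eq
    have h2 : M.mulVec w ⬝ᵥ (hM.eigenvectorBasis i).ofLp
        = hM.eigenvalues i * (w ⬝ᵥ (hM.eigenvectorBasis i).ofLp) := by
      have h3 : M.mulVec w = Matrix.vecMul w M := by
        rw [← Matrix.mulVec_transpose, hT]
      rw [h3, ← Matrix.dotProduct_mulVec, h]
      simp
    simp only [EuclideanSpace.inner_eq_star_dotProduct, star_trivial, sub_dotProduct,
      smul_dotProduct, h2, smul_eq_mul]
    ring
  apply le_of_sq_le_sq _ (by positivity)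
  rw [mul_pow, ← hM.eigenvectorBasis.sum_sq_norm_inner_right,
    ← hM.eigenvectorBasis.sum_sq_norm_inner_right, Finset.mul_sum]
  apply Finset.sum_le_sum
  intro i _
  rw [key, norm_mul, mul_pow, Real.norm_of_nonneg (h0 i)]
  have := h0 i
  have := h1 i
  gcongr

/-- for symmetric `K, K̂` with `K̂` PSD, `c > 0` with `c·λ_max(K̂) ≤ 1`, and
`λ = λ_min(K̂)`, the GD prediction sequences `u_{s+1} = u_s − c·K̂·(u_s − y)` and
`v_{s+1} = v_s − c·K·(v_s − y)` (both started at 0) satisfy, for every `t ≥ 1`,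
`‖u_t − v_t‖₂ ≤ c·‖K − K̂‖_op · Σ_{s=0}^{t−1} (1 − c·λ)^{t−1−s}·‖v_s − y‖₂`. -/
theorem gd_kernel_matrix_perturbation
    (n : ℕ) (hn : 0 < n) (K Khat : Matrix (Fin n) (Fin n) ℝ)
    (hK : K.IsHermitian) (hKhat : Khat.IsHermitian) (hpsd : Khat.PosSemidef)
    (c : ℝ) (hc : 0 < c)
    (hcmax : c * (⨆ i, hKhat.eigenvalues i) ≤ 1)
    (lam : ℝ) (hlam : lam = ⨅ i, hKhat.eigenvalues i)
    (y : Fin n → ℝ) (u v : ℕ → Fin n → ℝ)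
    (hu0 : u 0 = 0) (hv0 : v 0 = 0)
    (hu : ∀ s, u (s + 1) = u s - c • Khat.mulVec (u s - y))
    (hv : ∀ s, v (s + 1) = v s - c • K.mulVec (v s - y))
    (t : ℕ) (ht : 1 ≤ t) :
    Real.sqrt (∑ i, (u t i - v t i) ^ 2)
      ≤ c * ‖Matrix.toEuclideanCLM (𝕜 := ℝ) (K - Khat)‖ *
          ∑ s ∈ Finset.range t,
            (1 - c * lam) ^ (t - 1 - s) * Real.sqrt (∑ i, (v s i - y i) ^ 2) := by
  have hnorm : ∀ a b : Fin n → ℝ, Real.sqrt (∑ i, (a i - b i) ^ 2) = ‖WithLp.toLp 2 (a - b)‖ := by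
    intro a b
    simp [EuclideanSpace.norm_eq]
  simp only [hnorm]
  have : Nonempty (Fin n) := ⟨⟨0, hn⟩⟩
  have hle : ∀ i, lam ≤ hKhat.eigenvalues i := fun i =>
    hlam ▸ ciInf_le (Set.finite_range _).bddBelow i
  have h0 : ∀ i, 0 ≤ 1 - c * hKhat.eigenvalues i := fun i => by
    have := le_ciSup (Set.finite_range hKhat.eigenvalues).bddAbove i
    nlinarith
  have h1 : ∀ i, 1 - c * hKhat.eigenvalues i ≤ 1 - c * lam := fun i => by
    nlinarith [hle i]
  have hr : 0 ≤ 1 - c * lam := (h0 ⟨0, hn⟩).trans (h1 _)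
  clear ht
  induction t with
  | zero => simp [hu0, hv0]
  | succ t ih =>
    have e : u (t + 1) - v (t + 1) = ((u t - v t) - c • Khat.mulVec (u t - v t))
        + c • (K - Khat).mulVec (v t - y) := by
      rw [hu, hv]
      have : u t - y = (u t - v t) + (v t - y) := by abel
      rw [this, Matrix.mulVec_add, Matrix.sub_mulVec, smul_add, smul_sub]
      abel
    have hop : ‖WithLp.toLp 2 ((K - Khat).mulVec (v t - y))‖
        ≤ ‖Matrix.toEuclideanCLM (𝕜 := ℝ) (K - Khat)‖ * ‖WithLp.toLp 2 (v t - y)‖ := by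
      have := (Matrix.toEuclideanCLM (𝕜 := ℝ) (K - Khat)).le_opNorm (WithLp.toLp 2 (v t - y))
      rwa [Matrix.toEuclideanCLM_toLp] at this
    have hs : ∑ s ∈ Finset.range (t + 1), (1 - c * lam) ^ (t + 1 - 1 - s) *
          ‖WithLp.toLp 2 (v s - y)‖
        = (1 - c * lam) * (∑ s ∈ Finset.range t, (1 - c * lam) ^ (t - 1 - s) *
          ‖WithLp.toLp 2 (v s - y)‖) + ‖WithLp.toLp 2 (v t - y)‖ := by
      rw [Finset.sum_range_succ, Finset.mul_sum]
      congr 1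
      · apply Finset.sum_congr rfl
        intro s hs
        have hs := Finset.mem_range.1 hs
        rw [← mul_assoc, ← pow_succ']
        congr 2
        omega
      · simp
    rw [hs, e, WithLp.toLp_add, WithLp.toLp_smul]
    refine (norm_add_le _ _).trans ?_
    rw [norm_smul, Real.norm_of_nonneg hc.le]
    have hA := gd_aux_contract Khat hKhat c (1 - c * lam) hr h0 h1 (u t - v t)
    have hB := mul_le_mul_of_nonneg_left ih hr
    have hC := mul_le_mul_of_nonneg_left hop hc.le
    linarith
end
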